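/- arXiv:2504.01761 — 3 statements merged into one kernel-verified Lean document; each statement's English description precedes it below -/
import Mathlib

section
/- Let ν be a Borel probability measure on ℝ whose characteristic function φ_ν(t) = ∫ e^{itu} dν(u) is nonvanishing on ℝ, and let K : ℝ → ℝ be continuous and Lebesgue integrable with Fourier transform φ_K(t) = ∫ e^{itv} K(v) dv integrable and supported in [−1,1]. Then for every Borel probability measure μ on ℝ, every x ∈ ℝ and every h > 0, the deconvolution kernel satisfies ∫ K_{ν,h}(x − w) d(μ ∗ ν)(w) = ∫ h^{-1} K((x − u)/h) dμ(u), where μ ∗ ν is the convolution of μ and ν. -/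
open MeasureTheory Filter Set
open scoped Topology

/-- Characteristic function of a measure `ν` on `ℝ`: `φ_ν(t) = ∫ e^{itu} dν(u)`. -/
noncomputable def charFunM (ν : Measure ℝ) (t : ℝ) : ℂ :=
  ∫ u, Complex.exp (Complex.I * (t : ℂ) * (u : ℂ)) ∂ν

/-- Fourier transform of a kernel `K`: `φ_K(t) = ∫ e^{itv} K(v) dv`. -/
noncomputable def fourierK (K : ℝ → ℝ) (t : ℝ) : ℂ :=
  ∫ v : ℝ, Complex.exp (Complex.I * (t : ℂ) * (v : ℂ)) * (K v : ℂ)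

/-- The deconvolution kernel
`K_{ν,h}(x) = (1/(2πh)) ∫ e^{-itx/h} φ_K(t)/φ_ν(t/h) dt`. -/
noncomputable def deconvKernel (φK φU : ℝ → ℂ) (h x : ℝ) : ℂ :=
  (1 / (2 * Real.pi * h) : ℝ) •
    ∫ t : ℝ, Complex.exp (-(Complex.I * (t : ℂ) * (x : ℂ) / (h : ℂ))) * (φK t / φU (t / h))

/-- Convolution of two measures on `ℝ`. -/
noncomputable def mconv (μ ν : Measure ℝ) : Measure ℝ :=
  (μ.prod ν).map (fun p => p.1 + p.2)

lemma charFunM_eq (ν : Measure ℝ) (t : ℝ) : charFunM ν t = charFun ν t := by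
  rw [charFun_apply_real, charFunM]
  congr 1
  ext u
  congr 1
  ring

lemma swap_aux (P : Measure ℝ) [IsProbabilityMeasure P] (G : ℝ → ℂ) (hG : Integrable G)
    (x h c : ℝ) :
    ∫ w, (c • ∫ t : ℝ, Complex.exp (-(Complex.I * (t : ℂ) * ((x - w : ℝ) : ℂ) / (h : ℂ)))
        * G t) ∂P
      = c • ∫ t : ℝ, Complex.exp (-(Complex.I * (t : ℂ) * (x : ℂ) / (h : ℂ)))
          * (G t * charFunM P (t / h)) := by
  rw [integral_smul, integral_integral_swap]
  · congr 2
    ext t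
    have : ∀ w : ℝ, Complex.exp (-(Complex.I * (t : ℂ) * ((x - w : ℝ) : ℂ) / (h : ℂ))) * G t
        = (Complex.exp (-(Complex.I * (t : ℂ) * (x : ℂ) / (h : ℂ))) * G t) *
          Complex.exp (Complex.I * ((t / h : ℝ) : ℂ) * (w : ℂ)) := by
      intro w
      rw [mul_right_comm (Complex.exp _) (G t), ← Complex.exp_add]
      congr 2
      push_cast
      ring
    simp_rw [this]
    rw [integral_const_mul, charFunM, mul_assoc]
  · have h1 : Integrable (fun p : ℝ × ℝ => G p.2) (P.prod volume) := hG.comp_snd P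
    refine h1.bdd_mul (c := 1) ?_ ?_
    · exact Continuous.aestronglyMeasurable (by fun_prop)
    · refine Filter.Eventually.of_forall fun p => ?_
      have : -(Complex.I * (p.2 : ℂ) * ((x - p.1 : ℝ) : ℂ) / (h : ℂ))
          = ((-(p.2 * (x - p.1) / h) : ℝ) : ℂ) * Complex.I := by
        push_cast
        ring
      rw [this, Complex.norm_exp_ofReal_mul_I]

lemma inversion_aux (K : ℝ → ℝ) (hKcont : Continuous K) (hKint : Integrable K)
    (hφKint : Integrable (fourierK K)) (y : ℝ) :
    ∫ t : ℝ, Complex.exp (-(Complex.I * (t : ℂ) * (y : ℂ))) * fourierK K t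
      = (2 * Real.pi : ℝ) • (K y : ℂ) := by
  have hpi : (0 : ℝ) < 2 * Real.pi := by positivity
  have e1 : ∀ w : ℝ, FourierTransformInv.fourierInv (fun v => (K v : ℂ)) w
      = fourierK K (2 * Real.pi * w) := by
    intro w
    rw [Real.fourierInv_eq', fourierK]
    congr 1
    ext v
    simp only [smul_eq_mul]
    congr 2
    simp
    ring
  have e2 : FourierTransform.fourier (FourierTransformInv.fourierInv (fun v => (K v : ℂ))) y = (K y : ℂ) := by
    refine MeasureTheory.Integrable.fourier_fourierInv_eq hKint.ofReal ?_ (by fun_prop)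
    have : Integrable (FourierTransformInv.fourierInv (fun v => (K v : ℂ))) := by
      rw [funext e1]
      exact hφKint.comp_mul_left' hpi.ne'
    have h3 := this.comp_neg
    refine h3.congr (Filter.Eventually.of_forall fun v => ?_)
    simp only
    rw [Real.fourierInv_eq_fourier_neg, neg_neg]
  rw [← e2, Real.fourier_eq']
  have := Measure.integral_comp_mul_left (fun t : ℝ => Complex.exp (-(Complex.I * (t : ℂ) * (y : ℂ))) * fourierK K t) (2 * Real.pi)
  rw [abs_of_pos (inv_pos.2 hpi)] at this
  rw [← inv_smul_eq_iff₀ hpi.ne', ← this]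
  congr 1
  ext v
  rw [e1, smul_eq_mul]
  congr 2
  simp
  ring

/-- the deconvolution kernel integrated against `μ ∗ ν` reproduces the
ordinary kernel smoother integrated against `μ`. -/
theorem deconv_kernel_unbiased_measure
    (ν : Measure ℝ) [IsProbabilityMeasure ν]
    (hφν : ∀ t : ℝ, charFunM ν t ≠ 0)
    (K : ℝ → ℝ) (hKcont : Continuous K) (hKint : Integrable K)
    (hφKint : Integrable (fourierK K))
    (hφKsupp : Function.support (fourierK K) ⊆ Set.Icc (-1 : ℝ) 1)
    (μ : Measure ℝ) [IsProbabilityMeasure μ]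
    (x h : ℝ) (hh : 0 < h) :
    ∫ w, deconvKernel (fourierK K) (charFunM ν) h (x - w) ∂(mconv μ ν)
      = ∫ u, ((h⁻¹ * K ((x - u) / h) : ℝ) : ℂ) ∂μ := by
  have hconv : mconv μ ν = μ.conv ν := rfl
  have hpi := Real.pi_pos
  have hcont : Continuous (charFunM ν) := by
    rw [funext (charFunM_eq ν)]
    exact continuous_charFun
  have hG : Integrable (fun t => fourierK K t / charFunM ν (t / h)) := by
    have hs : Function.support (fun t => fourierK K t / charFunM ν (t / h)) ⊆ Icc (-1 : ℝ) 1 := by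
      intro t ht
      apply hφKsupp
      intro h0
      apply ht
      simp [h0]
    rw [← integrableOn_iff_integrable_of_support_subset hs]
    simp_rw [div_eq_mul_inv]
    refine IntegrableOn.mul_continuousOn hφKint.integrableOn ?_ isCompact_Icc
    refine Continuous.continuousOn (Continuous.inv₀ ?_ fun t => hφν _)
    exact hcont.comp (by fun_prop)
  have key : ∀ u : ℝ, ((h⁻¹ * K ((x - u) / h) : ℝ) : ℂ) = (1 / (2 * Real.pi * h) : ℝ) •
      ∫ t : ℝ, Complex.exp (-(Complex.I * (t : ℂ) * ((x - u : ℝ) : ℂ) / (h : ℂ)))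
        * fourierK K t := by
    intro u
    have := inversion_aux K hKcont hKint hφKint ((x - u) / h)
    have e : ∀ t : ℝ, -(Complex.I * (t : ℂ) * ((x - u : ℝ) : ℂ) / (h : ℂ))
        = -(Complex.I * (t : ℂ) * (((x - u) / h : ℝ) : ℂ)) := by
      intro t
      push_cast
      ring
    simp_rw [e]
    rw [this, smul_smul, Complex.real_smul, ← Complex.ofReal_mul]
    congr 2
    field_simp
  simp_rw [key, deconvKernel]
  have : IsProbabilityMeasure (mconv μ ν) := by rw [hconv]; infer_instance
  rw [swap_aux _ _ hG, swap_aux _ _ hφKint]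
  congr 2
  ext t
  congr 1
  have h0 := hφν (t / h)
  rw [hconv, charFunM_eq (μ.conv ν), charFun_conv, ← charFunM_eq, ← charFunM_eq]
  field_simp
end

section
/- Let X, Y, U be real random variables on a common probability space with U independent of the pair (X, Y), set W = X + U, and let the characteristic function φ_U of U be nonvanishing. Let K : ℝ → ℝ be continuous and integrable with Fourier transform φ_K integrable and supported in [−1,1], and let ψ : ℝ → ℝ be bounded and measurable. Then for every x ∈ ℝ and h > 0, E[ψ(Y) · K_{U,h}(x − W)] = E[ψ(Y) · h^{-1} K((x − X)/h)]. -/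
open MeasureTheory Filter Set
open scoped Topology

/-- Characteristic function of a real random variable `Z` under `P`: `φ_Z(t) = E[e^{itZ}]`. -/
noncomputable def charRV {Ω : Type*} [MeasurableSpace Ω] (P : Measure Ω) (Z : Ω → ℝ) (t : ℝ) : ℂ :=
  ∫ ω, Complex.exp (Complex.I * (t : ℂ) * (Z ω : ℂ)) ∂P

lemma aux_norm_exp (z : ℂ) (hz : z.re = 0) : ‖Complex.exp z‖ = 1 := by
  rw [Complex.norm_exp, hz, Real.exp_zero]

lemma aux_cont_charRV {Ω : Type*} [MeasurableSpace Ω] (P : Measure Ω) [IsProbabilityMeasure P]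
    (U : Ω → ℝ) (hU : Measurable U) : Continuous (charRV P U) := by
  unfold charRV
  refine continuous_of_dominated (bound := fun _ => 1) ?_ ?_ ?_ ?_
  · intro t
    exact (by fun_prop : Measurable _).aestronglyMeasurable
  · intro t
    exact Eventually.of_forall fun ω => (aux_norm_exp _ (by simp)).le
  · exact integrable_const _
  · exact Eventually.of_forall fun ω => by fun_prop

lemma aux_fourierK_eq (K : ℝ → ℝ) (w : ℝ) :
    FourierTransform.fourier (fun v => (K v : ℂ)) w = fourierK K (-(2 * Real.pi) * w) := by
  rw [Real.fourier_real_eq_integral_exp_smul]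
  unfold fourierK
  congr 1
  ext v
  rw [smul_eq_mul]
  congr 2
  push_cast
  ring

lemma aux_inversion (K : ℝ → ℝ) (hKcont : Continuous K) (hKint : Integrable K)
    (hφKint : Integrable (fourierK K)) (v : ℝ) :
    (1 / (2 * Real.pi) : ℝ) • ∫ t : ℝ, Complex.exp (-(Complex.I * (t : ℂ) * (v : ℂ))) * fourierK K t
      = (K v : ℂ) := by
  have hpi := Real.pi_pos
  have e : FourierTransform.fourier (fun v => (K v : ℂ)) = fun w => fourierK K (-(2 * Real.pi) * w) :=
    funext (aux_fourierK_eq K)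
  have hint : Integrable (FourierTransform.fourier (fun v => (K v : ℂ))) := by
    rw [e]
    exact hφKint.comp_mul_left' (by simp [hpi.ne'])
  have h := congrFun (Continuous.fourierInv_fourier_eq (f := fun v => (K v : ℂ)) (by fun_prop) hKint.ofReal hint) v
  rw [← h, e, Real.fourierInv_eq']
  have := Measure.integral_comp_mul_left (fun t : ℝ => Complex.exp (-(Complex.I * (t : ℂ) * (v : ℂ))) * fourierK K t) (-(2 * Real.pi))
  have h2 : |(-(2 * Real.pi))⁻¹| = 1 / (2 * Real.pi) := by
    rw [abs_inv, abs_neg, abs_of_pos (by positivity), one_div]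
  rw [h2] at this
  rw [← this]
  congr 1
  ext w
  rw [smul_eq_mul]
  congr 2
  simp
  ring

/-- `E[ψ(Y)·K_{U,h}(x − W)] = E[ψ(Y)·h⁻¹K((x − X)/h)]` with `W = X + U`,
`U` independent of `(X, Y)` and `φ_U` nonvanishing. -/
theorem deconv_kernel_unbiased_rv
    {Ω : Type*} [MeasurableSpace Ω] (P : Measure Ω) [IsProbabilityMeasure P]
    (X Y U : Ω → ℝ) (hX : Measurable X) (hY : Measurable Y) (hU : Measurable U)
    (hindep : ProbabilityTheory.IndepFun (fun ω => (X ω, Y ω)) U P)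
    (hφU : ∀ t : ℝ, charRV P U t ≠ 0)
    (K : ℝ → ℝ) (hKcont : Continuous K) (hKint : Integrable K)
    (hφKint : Integrable (fourierK K))
    (hφKsupp : Function.support (fourierK K) ⊆ Set.Icc (-1 : ℝ) 1)
    (ψ : ℝ → ℝ) (hψm : Measurable ψ) (Cψ : ℝ) (hψb : ∀ y : ℝ, |ψ y| ≤ Cψ)
    (x h : ℝ) (hh : 0 < h) :
    ∫ ω, (ψ (Y ω) : ℂ) * deconvKernel (fourierK K) (charRV P U) h (x - (X ω + U ω)) ∂P
      = ∫ ω, ((ψ (Y ω) * (h⁻¹ * K ((x - X ω) / h)) : ℝ) : ℂ) ∂P := by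
  have hcont := aux_cont_charRV P U hU
  set φK := fourierK K with hφK
  set φU := charRV P U with hφUdef
  set g : ℝ → ℂ := fun t => φK t / φU (t / h) with hg
  have hhC : (h : ℂ) ≠ 0 := by exact_mod_cast hh.ne'
  have hgint : Integrable g := by
    have hs : Function.support g ⊆ Set.Icc (-1 : ℝ) 1 := by
      intro t ht
      apply hφKsupp
      intro h0
      apply ht
      simp [hg, h0]
    rw [← integrableOn_iff_integrable_of_support_subset hs]
    have : g = fun t => φK t * (φU (t / h))⁻¹ := by
      ext t; simp [hg, div_eq_mul_inv]
    rw [this]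
    refine IntegrableOn.mul_continuousOn hφKint.integrableOn ?_ isCompact_Icc
    exact (Continuous.inv₀ (by fun_prop) (fun t => hφU _)).continuousOn
  -- general joint integrability
  have key : ∀ (Z : Ω → ℝ), Measurable Z → ∀ f : ℝ → ℂ, Integrable f →
      Integrable (Function.uncurry fun (ω : Ω) (t : ℝ) => (ψ (Y ω) : ℂ) *
        (Complex.exp (-(Complex.I * (t : ℂ) * ((x - Z ω : ℝ) : ℂ) / (h : ℂ))) * f t))
        (P.prod volume) := by
    intro Z hZ f hf
    have h1 : Integrable (fun p : Ω × ℝ => f p.2) (P.prod volume) := hf.comp_snd P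
    have h2 := h1.bdd_mul (c := Cψ) (f := fun p : Ω × ℝ => (ψ (Y p.1) : ℂ) *
        Complex.exp (-(Complex.I * (p.2 : ℂ) * ((x - Z p.1 : ℝ) : ℂ) / (h : ℂ))))
      (by
        refine Measurable.aestronglyMeasurable ?_
        fun_prop)
      (Eventually.of_forall fun p => by
        rw [norm_mul, aux_norm_exp, mul_one, Complex.norm_real]
        · exact hψb _
        · rw [Complex.neg_re, Complex.div_ofReal_re]
          simp)
    refine h2.congr (Eventually.of_forall fun p => ?_)
    simp only [Function.uncurry]
    ring
  have hXU : Measurable fun ω => X ω + U ω := hX.add hU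
  have step : ∀ t : ℝ,
      ∫ ω, (ψ (Y ω) : ℂ) *
        (Complex.exp (-(Complex.I * (t : ℂ) * ((x - (X ω + U ω) : ℝ) : ℂ) / (h : ℂ))) * g t) ∂P
      = ∫ ω, (ψ (Y ω) : ℂ) *
        (Complex.exp (-(Complex.I * (t : ℂ) * ((x - X ω : ℝ) : ℂ) / (h : ℂ))) * φK t) ∂P := by
    intro t
    let F : ℝ × ℝ → ℂ := fun p => (ψ p.2 : ℂ) *
      Complex.exp (-(Complex.I * (t : ℂ) * ((x - p.1 : ℝ) : ℂ) / (h : ℂ)))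
    let G : ℝ → ℂ := fun u => Complex.exp (Complex.I * ((t / h : ℝ) : ℂ) * (u : ℂ))
    have hF : Measurable F := by fun_prop
    have hG : Measurable G := by fun_prop
    have hi := hindep.comp hF hG
    have hm := hi.integral_fun_mul_eq_mul_integral
      (hF.comp (hX.prodMk hY)).aestronglyMeasurable (hG.comp hU).aestronglyMeasurable
    have hGU : ∫ ω, (G ∘ U) ω ∂P = φU (t / h) := rfl
    rw [hGU] at hm
    calc _ = ∫ ω, ((F ∘ fun ω => (X ω, Y ω)) ω * (G ∘ U) ω) * g t ∂P := by
            congr 1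
            ext ω
            simp only [F, G, Function.comp]
            rw [← mul_assoc, mul_assoc (ψ (Y ω) : ℂ) (Complex.exp _) (Complex.exp _),
              ← Complex.exp_add]
            congr 3
            push_cast
            field_simp
            ring
      _ = (∫ ω, (F ∘ fun ω => (X ω, Y ω)) ω ∂P) * φK t := by
            rw [integral_mul_const, hm, hg, mul_assoc, mul_div_cancel₀ _ (hφU _)]
      _ = _ := by
            rw [← integral_mul_const]
            congr 1
            ext ω
            simp only [F, Function.comp]
            ring
  unfold deconvKernel
  calc _ = (1 / (2 * Real.pi * h) : ℝ) • ∫ ω, (∫ t : ℝ, (ψ (Y ω) : ℂ) *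
        (Complex.exp (-(Complex.I * (t : ℂ) * ((x - (X ω + U ω) : ℝ) : ℂ) / (h : ℂ))) * g t)) ∂P := by
          rw [← integral_smul]
          congr 1
          ext ω
          rw [integral_const_mul, mul_smul_comm]
    _ = (1 / (2 * Real.pi * h) : ℝ) • ∫ ω, (∫ t : ℝ, (ψ (Y ω) : ℂ) *
        (Complex.exp (-(Complex.I * (t : ℂ) * ((x - X ω : ℝ) : ℂ) / (h : ℂ))) * φK t)) ∂P := by
          rw [integral_integral_swap (key _ hXU g hgint),
            integral_integral_swap (key _ hX φK hφKint)]
          simp_rw [step]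
    _ = _ := by
          rw [← integral_smul]
          congr 1
          ext ω
          rw [integral_const_mul]
          have := aux_inversion K hKcont hKint hφKint ((x - X ω) / h)
          push_cast
          rw [Complex.ofReal_div, Complex.ofReal_sub] at this
          rw [← this]
          simp only [Complex.real_smul, mul_div_assoc, mul_assoc, ← hφK]
          push_cast
          generalize (∫ t : ℝ, Complex.exp (-(Complex.I * ((t : ℂ) * (((x : ℂ) - (X ω : ℂ)) / (h : ℂ)))))
            * φK t) = J
          field_simp
end

section
/- For σ₁, σ₂ > 0 and ρ ∈ (−1, 1), let f be the centered bivariate normal density with variances σ₁², σ₂² and correlation ρ, and let f₁₁ and f₂₂ denote its second partial derivatives with respect to x and y respectively. Then ∫_{ℝ²} f₁₁(x, y) f₂₂(x, y) dx dy = (1 + 2ρ²) / (16π (1 − ρ²)^{5/2} σ₁³ σ₂³). -/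
open MeasureTheory

/-- The centered bivariate normal density with variances `σ₁², σ₂²` and correlation `ρ`. -/
noncomputable def bvnDensity (σ₁ σ₂ ρ : ℝ) (x y : ℝ) : ℝ :=
  (2 * Real.pi * σ₁ * σ₂ * Real.sqrt (1 - ρ ^ 2))⁻¹ *
    Real.exp (-(x ^ 2 / σ₁ ^ 2 - 2 * ρ * x * y / (σ₁ * σ₂) + y ^ 2 / σ₂ ^ 2) /
      (2 * (1 - ρ ^ 2)))

lemma aux_int (a : ℝ) (ha : 0 < a) (n : ℕ) :
    Integrable (fun u : ℝ => u ^ n * Real.exp (-a * u ^ 2)) := by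
  have h := integrable_rpow_mul_exp_neg_mul_sq ha (s := (n : ℝ))
    (by have : (0:ℝ) ≤ n := Nat.cast_nonneg n
        linarith)
  simpa [Real.rpow_natCast] using h

lemma aux_rec (a : ℝ) (ha : 0 < a) (n : ℕ) :
    ((n : ℝ) + 1) * ∫ u : ℝ, u ^ n * Real.exp (-a * u ^ 2)
      = 2 * a * ∫ u : ℝ, u ^ (n + 2) * Real.exp (-a * u ^ 2) := by
  have hd : ∀ u : ℝ, HasDerivAt (fun u : ℝ => u ^ (n + 1) * Real.exp (-a * u ^ 2))
      (((n : ℝ) + 1) * (u ^ n * Real.exp (-a * u ^ 2))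
        - 2 * a * (u ^ (n + 2) * Real.exp (-a * u ^ 2))) u := by
    intro u
    have h1 := (hasDerivAt_pow (n + 1) u).mul
      (((hasDerivAt_pow 2 u).const_mul (-a)).exp)
    refine h1.congr_deriv ?_
    push_cast
    ring
  have h := integral_eq_zero_of_hasDerivAt_of_integrable hd
    (((aux_int a ha n).const_mul _).sub ((aux_int a ha (n + 2)).const_mul _))
    (aux_int a ha (n + 1))
  rw [integral_sub ((aux_int a ha n).const_mul _) ((aux_int a ha (n + 2)).const_mul _),
    integral_const_mul, integral_const_mul] at h
  linarith

lemma aux_one (a : ℝ) (ha : 0 < a) : ∫ u : ℝ, u ^ 1 * Real.exp (-a * u ^ 2) = 0 := by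
  have hd : ∀ u : ℝ, HasDerivAt (fun u : ℝ => u ^ 0 * Real.exp (-a * u ^ 2))
      (-2 * a * (u ^ 1 * Real.exp (-a * u ^ 2))) u := by
    intro u
    have h1 := (hasDerivAt_pow 0 u).mul
      (((hasDerivAt_pow 2 u).const_mul (-a)).exp)
    refine h1.congr_deriv ?_
    push_cast
    simp
    ring
  have h := integral_eq_zero_of_hasDerivAt_of_integrable hd
    ((aux_int a ha 1).const_mul _) (aux_int a ha 0)
  rw [integral_const_mul] at h
  have : -2 * a ≠ 0 := by linarith
  exact (mul_eq_zero.mp h).resolve_left this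

lemma aux_zero (a : ℝ) : ∫ u : ℝ, u ^ 0 * Real.exp (-a * u ^ 2) = Real.sqrt (Real.pi / a) := by
  simpa using integral_gaussian a

lemma aux_lin (a : ℝ) (ha : 0 < a) (p q : ℝ) (m n : ℕ) :
    Integrable (fun u : ℝ => (p * u ^ m + q * u ^ n) * Real.exp (-a * u ^ 2)) ∧
    ∫ u : ℝ, (p * u ^ m + q * u ^ n) * Real.exp (-a * u ^ 2)
      = p * (∫ u : ℝ, u ^ m * Real.exp (-a * u ^ 2))
        + q * ∫ u : ℝ, u ^ n * Real.exp (-a * u ^ 2) := by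
  have e : (fun u : ℝ => (p * u ^ m + q * u ^ n) * Real.exp (-a * u ^ 2))
      = fun u => p * (u ^ m * Real.exp (-a * u ^ 2)) + q * (u ^ n * Real.exp (-a * u ^ 2)) := by
    ext u; ring
  rw [e]
  refine ⟨((aux_int a ha m).const_mul _).add ((aux_int a ha n).const_mul _), ?_⟩
  rw [integral_add ((aux_int a ha m).const_mul _) ((aux_int a ha n).const_mul _),
    integral_const_mul, integral_const_mul]

/-- the integral after the shear -/
lemma aux_prod (a b c d : ℝ) (ha : 0 < a) (hd : 0 < d) :
    ∫ p : ℝ × ℝ, ((a * p.2) ^ 2 - a) * ((d * p.1 - b * p.2) ^ 2 - c) *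
        Real.exp (-(a * p.2 ^ 2 + d * p.1 ^ 2))
      = Real.sqrt (Real.pi / a) * Real.sqrt (Real.pi / d) * (a * c / 2 - a * d / 4 + b ^ 2 / 4) := by
  have e : (fun p : ℝ × ℝ => ((a * p.2) ^ 2 - a) * ((d * p.1 - b * p.2) ^ 2 - c) *
        Real.exp (-(a * p.2 ^ 2 + d * p.1 ^ 2)))
      = fun p => ((d ^ 2 * p.1 ^ 2 + (-c) * p.1 ^ 0) * Real.exp (-d * p.1 ^ 2)) *
          ((a ^ 2 * p.2 ^ 2 + (-a) * p.2 ^ 0) * Real.exp (-a * p.2 ^ 2))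
        + ((-2 * b * d * p.1 ^ 1 + 0 * p.1 ^ 0) * Real.exp (-d * p.1 ^ 2)) *
          ((a ^ 2 * p.2 ^ 3 + (-a) * p.2 ^ 1) * Real.exp (-a * p.2 ^ 2))
        + ((1 * p.1 ^ 0 + 0 * p.1 ^ 0) * Real.exp (-d * p.1 ^ 2)) *
          ((a ^ 2 * b ^ 2 * p.2 ^ 4 + (-a * b ^ 2) * p.2 ^ 2) * Real.exp (-a * p.2 ^ 2)) := by
    ext p
    rw [show -(a * p.2 ^ 2 + d * p.1 ^ 2) = -a * p.2 ^ 2 + -d * p.1 ^ 2 by ring, Real.exp_add]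
    ring
  have A1 := aux_lin d hd (d ^ 2) (-c) 2 0
  have A2 := aux_lin a ha (a ^ 2) (-a) 2 0
  have B1 := aux_lin d hd (-2 * b * d) 0 1 0
  have B2 := aux_lin a ha (a ^ 2) (-a) 3 1
  have C1 := aux_lin d hd 1 0 0 0
  have C2 := aux_lin a ha (a ^ 2 * b ^ 2) (-a * b ^ 2) 4 2
  have IA := A1.1.mul_prod A2.1
  have IB := B1.1.mul_prod B2.1
  have IC := C1.1.mul_prod C2.1
  rw [e, Measure.volume_eq_prod]
  have s1 := integral_add (IA.add IB) IC
  have s2 := integral_add IA IB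
  simp only [Pi.add_apply] at s1
  rw [s1, s2]
  have P1 := integral_prod_mul (μ := (volume : Measure ℝ)) (ν := (volume : Measure ℝ))
    (fun u : ℝ => (d ^ 2 * u ^ 2 + (-c) * u ^ 0) * Real.exp (-d * u ^ 2))
    (fun u : ℝ => (a ^ 2 * u ^ 2 + (-a) * u ^ 0) * Real.exp (-a * u ^ 2))
  have P2 := integral_prod_mul (μ := (volume : Measure ℝ)) (ν := (volume : Measure ℝ))
    (fun u : ℝ => (-2 * b * d * u ^ 1 + 0 * u ^ 0) * Real.exp (-d * u ^ 2))
    (fun u : ℝ => (a ^ 2 * u ^ 3 + (-a) * u ^ 1) * Real.exp (-a * u ^ 2))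
  have P3 := integral_prod_mul (μ := (volume : Measure ℝ)) (ν := (volume : Measure ℝ))
    (fun u : ℝ => (1 * u ^ 0 + 0 * u ^ 0) * Real.exp (-d * u ^ 2))
    (fun u : ℝ => (a ^ 2 * b ^ 2 * u ^ 4 + (-a * b ^ 2) * u ^ 2) * Real.exp (-a * u ^ 2))
  rw [P1, P2, P3, A1.2, A2.2, B1.2, B2.2, C1.2, C2.2]
  have ha2 := aux_rec a ha 0
  have ha4 := aux_rec a ha 2
  have hd2 := aux_rec d hd 0
  have hd1 := aux_one d hd
  norm_num only [Nat.cast_zero, Nat.cast_ofNat] at ha2 ha4 hd2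
  have z1 := aux_zero a
  have z2 := aux_zero d
  rw [z1] at ha2
  rw [z2] at hd2
  rw [z1, z2, hd1]
  clear z1 z2 P1 P2 P3 s1 s2 IA IB IC A1 A2 B1 B2 C1 C2 e hd1
  generalize (∫ u : ℝ, u ^ 2 * Real.exp (-a * u ^ 2)) = X2 at *
  generalize (∫ u : ℝ, u ^ 4 * Real.exp (-a * u ^ 2)) = X4 at *
  generalize (∫ u : ℝ, u ^ 2 * Real.exp (-d * u ^ 2)) = Y2 at *
  generalize Real.sqrt (Real.pi / a) = S at *
  generalize Real.sqrt (Real.pi / d) = T at *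
  have e1 : X2 = S / (2 * a) := by field_simp; linarith
  have e2 : X4 = 3 * S / (4 * a ^ 2) := by
    rw [e1] at ha4; field_simp at ha4 ⊢; linarith
  have e3 : Y2 = T / (2 * d) := by field_simp; linarith
  rw [e1, e2, e3]
  field_simp
  ring

lemma aux_shear (m : ℝ) (G : ℝ × ℝ → ℝ) (hG : Continuous G) :
    ∫ p : ℝ × ℝ, G p = ∫ p : ℝ × ℝ, G (p.2 + m * p.1, p.1) := by
  have h1 : MeasurePreserving (fun p : ℝ × ℝ => (p.1, p.2 + m * p.1))
      ((volume : Measure ℝ).prod volume) ((volume : Measure ℝ).prod volume) :=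
    (MeasurePreserving.id (volume : Measure ℝ)).skew_product
      (g := fun y x => x + m * y) (by fun_prop)
      (Filter.Eventually.of_forall fun y => (measurePreserving_add_right volume (m * y)).map_eq)
  have h2 := (Measure.measurePreserving_swap (μ := (volume : Measure ℝ))
    (ν := (volume : Measure ℝ))).comp h1
  rw [Measure.volume_eq_prod]
  conv_lhs => rw [← h2.map_eq]
  rw [integral_map h2.measurable.aemeasurable hG.aestronglyMeasurable]
  rfl

lemma aux_deriv (K α β γ : ℝ) (g : ℝ → ℝ)
    (hg : g = fun x => K * Real.exp (-(α * x ^ 2 - 2 * β * x + γ) / 2)) (x : ℝ) :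
    iteratedDeriv 2 g x
      = K * ((α * x - β) ^ 2 - α) * Real.exp (-(α * x ^ 2 - 2 * β * x + γ) / 2) := by
  have hin : ∀ x : ℝ, HasDerivAt (fun x => Real.exp (-(α * x ^ 2 - 2 * β * x + γ) / 2))
      (Real.exp (-(α * x ^ 2 - 2 * β * x + γ) / 2) * (-(α * x - β))) x := by
    intro x
    have h := ((((((hasDerivAt_pow 2 x).const_mul α).sub
      ((hasDerivAt_id' x).const_mul (2 * β))).add_const γ).neg).div_const 2).exp
    refine h.congr_deriv ?_
    push_cast
    simp
    ring
  have h1 : deriv g = fun x => K * (Real.exp (-(α * x ^ 2 - 2 * β * x + γ) / 2)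
      * (-(α * x - β))) := by
    ext x
    rw [hg]
    exact ((hin x).const_mul K).deriv
  rw [iteratedDeriv_succ, iteratedDeriv_one, h1]
  have h3 : HasDerivAt (fun x : ℝ => -(α * x - β)) (-α) x := by
    have h := (((hasDerivAt_id' x).const_mul α).sub_const β).neg
    exact h.congr_deriv (by ring)
  refine (((hin x).mul h3).const_mul K).deriv.trans ?_
  ring

/-- `∫∫ f₁₁ f₂₂ dx dy = (1 + 2ρ²) / (16π (1 − ρ²)^{5/2} σ₁³ σ₂³)` for the
centered bivariate normal density `f`, where `f₁₁ = ∂²f/∂x²` and `f₂₂ = ∂²f/∂y²`. -/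
theorem bvn_f11_f22_integral
    (σ₁ σ₂ ρ : ℝ) (hσ₁ : 0 < σ₁) (hσ₂ : 0 < σ₂) (hρ : ρ ∈ Set.Ioo (-1 : ℝ) 1) :
    ∫ p : ℝ × ℝ, (iteratedDeriv 2 (fun x => bvnDensity σ₁ σ₂ ρ x p.2) p.1) *
        (iteratedDeriv 2 (fun y => bvnDensity σ₁ σ₂ ρ p.1 y) p.2)
      = (1 + 2 * ρ ^ 2) / (16 * Real.pi * (1 - ρ ^ 2) ^ ((5 : ℝ) / 2) * σ₁ ^ 3 * σ₂ ^ 3) := by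
  have hk : 0 < 1 - ρ ^ 2 := by nlinarith [hρ.1, hρ.2]
  obtain ⟨k, hkd⟩ : ∃ k, k = 1 - ρ ^ 2 := ⟨_, rfl⟩
  have hk0 : 0 < k := hkd ▸ hk
  set K := (2 * Real.pi * σ₁ * σ₂ * Real.sqrt (1 - ρ ^ 2))⁻¹ with hK
  obtain ⟨a, ha⟩ : ∃ a, a = 1 / (σ₁ ^ 2 * k) := ⟨_, rfl⟩
  obtain ⟨b, hb⟩ : ∃ b, b = ρ / (σ₁ * σ₂ * k) := ⟨_, rfl⟩
  obtain ⟨c, hc⟩ : ∃ c, c = 1 / (σ₂ ^ 2 * k) := ⟨_, rfl⟩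
  obtain ⟨d, hd⟩ : ∃ d, d = 1 / σ₂ ^ 2 := ⟨_, rfl⟩
  have ha0 : 0 < a := by rw [ha]; positivity
  have hd0 : 0 < d := by rw [hd]; positivity
  have hdc : d = c - b ^ 2 / a := by
    rw [hd, hc, hb, ha]
    field_simp
    linarith
  have hf : ∀ x y, bvnDensity σ₁ σ₂ ρ x y
      = K * Real.exp (-(a * x ^ 2 - 2 * (b * y) * x + c * y ^ 2) / 2) := by
    intro x y
    rw [bvnDensity, ← hkd, ha, hb, hc]
    rw [hkd] at *
    congr 2
    field_simp
  have hint : ∀ p : ℝ × ℝ, (iteratedDeriv 2 (fun x => bvnDensity σ₁ σ₂ ρ x p.2) p.1) *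
        (iteratedDeriv 2 (fun y => bvnDensity σ₁ σ₂ ρ p.1 y) p.2)
      = K ^ 2 * (((a * p.1 - b * p.2) ^ 2 - a) * ((c * p.2 - b * p.1) ^ 2 - c) *
        Real.exp (-(a * p.1 ^ 2 - 2 * b * p.1 * p.2 + c * p.2 ^ 2))) := by
    intro p
    rw [aux_deriv K a (b * p.2) (c * p.2 ^ 2) _ (by ext x; exact hf x p.2),
      aux_deriv K c (b * p.1) (a * p.1 ^ 2) _ (by ext y; rw [hf]; congr 2; ring)]
    rw [show -(a * p.1 ^ 2 - 2 * b * p.1 * p.2 + c * p.2 ^ 2)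
      = -(a * p.1 ^ 2 - 2 * (b * p.2) * p.1 + c * p.2 ^ 2) / 2
        + -(c * p.2 ^ 2 - 2 * (b * p.1) * p.2 + a * p.1 ^ 2) / 2 by ring, Real.exp_add]
    ring
  simp_rw [hint]
  rw [integral_const_mul, aux_shear (b / a) _ (by fun_prop)]
  have hsh : ∀ p : ℝ × ℝ,
      ((a * (p.2 + b / a * p.1) - b * p.1) ^ 2 - a) *
        ((c * p.1 - b * (p.2 + b / a * p.1)) ^ 2 - c) *
        Real.exp (-(a * (p.2 + b / a * p.1) ^ 2 - 2 * b * (p.2 + b / a * p.1) * p.1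
          + c * p.1 ^ 2))
      = ((a * p.2) ^ 2 - a) * ((d * p.1 - b * p.2) ^ 2 - c) *
        Real.exp (-(a * p.2 ^ 2 + d * p.1 ^ 2)) := by
    intro p
    have e1 : a * (p.2 + b / a * p.1) - b * p.1 = a * p.2 := by field_simp; ring
    have e2 : c * p.1 - b * (p.2 + b / a * p.1) = d * p.1 - b * p.2 := by rw [hdc]; ring
    have e3 : a * (p.2 + b / a * p.1) ^ 2 - 2 * b * (p.2 + b / a * p.1) * p.1 + c * p.1 ^ 2
        = a * p.2 ^ 2 + d * p.1 ^ 2 := by rw [hdc]; field_simp; ring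
    rw [e1, e2, e3]
  simp only [hsh]
  rw [aux_prod a b c d ha0 hd0]
  have hs : Real.sqrt (Real.pi / a) * Real.sqrt (Real.pi / d)
      = Real.pi * σ₁ * σ₂ * Real.sqrt k := by
    rw [← Real.sqrt_mul (by positivity)]
    rw [show Real.pi / a * (Real.pi / d) = (Real.pi * σ₁ * σ₂) ^ 2 * k by
      rw [ha, hd]; field_simp]
    rw [Real.sqrt_mul (by positivity), Real.sqrt_sq (by positivity)]
  have hr : k ^ ((5 : ℝ) / 2) = k ^ 2 * Real.sqrt k := by
    rw [show (5 : ℝ) / 2 = (2 : ℕ) + 1 / 2 by norm_num, Real.rpow_add hk0, Real.rpow_natCast,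
      Real.sqrt_eq_rpow]
  have hsk : 0 < Real.sqrt k := Real.sqrt_pos.mpr hk0
  have hsq : Real.sqrt k ^ 2 = k := Real.sq_sqrt hk0.le
  rw [hs, hK, ← hkd, hr, ha, hb, hc, hd]
  have hρk : ρ ^ 2 = 1 - k := by linarith
  have hpi := Real.pi_pos
  field_simp
  rw [hρk]
  ring
end
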